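/- (Interpolation Between Theories.) Let T₁ and T₂ be sets of propositional formulas and let P, Q ⊆ L(T₁) ∪ L(T₂) be sets of variables with P ⊆ L(T₁) and P ∪ Q ⊇ L(T₂). Let γ be a set of formulas logically equivalent to Cn^{L(T₁) ∩ L(T₂)}(T₂). Then for every formula φ ∈ 𝓛(T₁): Circ[T₁ ∪ γ;P;Q] ⊨ φ if and only if Circ[T₁ ∪ T₂;P;Q] ⊨ φ. -/

import Mathlib

namespace NMR

/-- Propositional formulas over a variable type `V`. -/
inductive PropForm (V : Type*) : Type _ where
  | var : V → PropForm V
  | tru : PropForm V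
  | fls : PropForm V
  | neg : PropForm V → PropForm V
  | conj : PropForm V → PropForm V → PropForm V
  | disj : PropForm V → PropForm V → PropForm V
  | impl : PropForm V → PropForm V → PropForm V

variable {V : Type*}

/-- Truth value of a formula under a valuation. -/
def PropForm.eval (ν : V → Bool) : PropForm V → Bool
  | .var v => ν v
  | .tru => true
  | .fls => false
  | .neg φ => !(φ.eval ν)
  | .conj φ ψ => φ.eval ν && ψ.eval ν
  | .disj φ ψ => φ.eval ν || ψ.eval ν
  | .impl φ ψ => !(φ.eval ν) || ψ.eval ν

/-- The set of variables occurring in a formula. -/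
def PropForm.vars : PropForm V → Set V
  | .var v => {v}
  | .tru => ∅
  | .fls => ∅
  | .neg φ => φ.vars
  | .conj φ ψ => φ.vars ∪ ψ.vars
  | .disj φ ψ => φ.vars ∪ ψ.vars
  | .impl φ ψ => φ.vars ∪ ψ.vars

/-- `ν ⊨ φ`. -/
def Sat (ν : V → Bool) (φ : PropForm V) : Prop := φ.eval ν = true

/-- `ν ⊨ T` for a set of formulas. -/
def SatSet (ν : V → Bool) (T : Set (PropForm V)) : Prop := ∀ φ ∈ T, Sat ν φ

/-- `T ⊨ φ`. -/
def Entails (T : Set (PropForm V)) (φ : PropForm V) : Prop :=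
  ∀ ν : V → Bool, SatSet ν T → Sat ν φ

/-- `T ⊨ Γ` for a set `Γ`. -/
def EntailsSet (T Γ : Set (PropForm V)) : Prop := ∀ φ ∈ Γ, Entails T φ

/-- A tautology is satisfied by every valuation. -/
def Tautology (φ : PropForm V) : Prop := ∀ ν : V → Bool, Sat ν φ

/-- `L(T)`: the set of variables occurring in a set of formulas. -/
def varsOf (T : Set (PropForm V)) : Set V := ⋃ φ ∈ T, φ.vars

/-- `𝓛(S)`: the set of formulas all of whose variables lie in `S`. -/
def FormsOver (S : Set V) : Set (PropForm V) := {φ | φ.vars ⊆ S}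

/-- `Cn^S(T)`: the formulas in `𝓛(S)` entailed by `T`. -/
def Cn (S : Set V) (T : Set (PropForm V)) : Set (PropForm V) :=
  {φ | φ.vars ⊆ S ∧ Entails T φ}

/-- Two sets of formulas are logically equivalent iff they have the same models. -/
def EquivTheories (T T' : Set (PropForm V)) : Prop :=
  ∀ ν : V → Bool, SatSet ν T ↔ SatSet ν T'

/-- `ν ≤_{P,Q} ν'`. -/
def circLe (P Q : Set V) (ν ν' : V → Bool) : Prop :=
  (∀ x, x ∉ P ∪ Q → ν x = ν' x) ∧
    {x | x ∈ P ∧ ν x = true} ⊆ {x | x ∈ P ∧ ν' x = true}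

/-- `ν <_{P,Q} ν'`. -/
def circLt (P Q : Set V) (ν ν' : V → Bool) : Prop :=
  circLe P Q ν ν' ∧ {x | x ∈ P ∧ ν x = true} ⊂ {x | x ∈ P ∧ ν' x = true}

/-- `ν` is a model of `Circ[T;P;Q]`. -/
def CircModel (T : Set (PropForm V)) (P Q : Set V) (ν : V → Bool) : Prop :=
  SatSet ν T ∧ ¬ ∃ ν' : V → Bool, SatSet ν' T ∧ circLt P Q ν' ν

/-- `Circ[T;P;Q] ⊨ φ`. -/
def CircEntails (T : Set (PropForm V)) (P Q : Set V) (φ : PropForm V) : Prop :=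
  ∀ ν : V → Bool, CircModel T P Q ν → Sat ν φ

/-!
A valuation satisfies `Cn^S(T)` iff it agrees on `S` with a model of `T`: by compactness, `T` is
consistent with the complete theory of the valuation over `S`. Hence, up to equivalence,
`T₁ ∪ γ` is obtained from `T₁ ∪ T₂` by forgetting the variables `L(T₂) \ L(T₁)`. These variables
all vary in the circumscription (they lie in `Q` and not in `P`), so changing them never affects
`<_{P,Q}`, and forgetting them commutes with taking minimal models.
-/

section Semantics

variable {T T' : Set (PropForm V)} {φ ψ : PropForm V} {μ ν : V → Bool}

theorem sat_tru : Sat ν .tru := rfl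

theorem sat_neg : Sat ν φ.neg ↔ ¬ Sat ν φ := by
  simp only [Sat, PropForm.eval, Bool.not_eq_true', Bool.not_eq_true]

theorem sat_conj : Sat ν (φ.conj ψ) ↔ Sat ν φ ∧ Sat ν ψ := by
  simp only [Sat, PropForm.eval, Bool.and_eq_true]

theorem satSet_union : SatSet ν (T ∪ T') ↔ SatSet ν T ∧ SatSet ν T' :=
  forall₂_or_left

theorem PropForm.eval_congr (h : Set.EqOn μ ν φ.vars) : φ.eval μ = φ.eval ν := by
  induction φ with
  | var x => exact h rfl
  | tru | fls => rfl
  | neg a iha => simp only [PropForm.eval, iha h]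
  | conj a b iha ihb | disj a b iha ihb | impl a b iha ihb =>
    have hab := Set.eqOn_union.1 h
    simp only [PropForm.eval, iha hab.1, ihb hab.2]

theorem sat_congr (h : Set.EqOn μ ν φ.vars) : Sat μ φ ↔ Sat ν φ := by
  rw [Sat, Sat, PropForm.eval_congr h]

theorem satSet_congr (h : Set.EqOn μ ν (varsOf T)) : SatSet μ T ↔ SatSet ν T :=
  forall₂_congr fun _ hφ => sat_congr (h.mono (Set.subset_biUnion_of_mem hφ))

end Semantics

section Compactness

variable {S : Set V} {T Γ : Set (PropForm V)} {μ ν : V → Bool}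

theorem PropForm.continuous_eval (φ : PropForm V) :
    Continuous fun ν : V → Bool => φ.eval ν := by
  induction φ with
  | var x => exact continuous_apply x
  | tru | fls => exact continuous_const
  | neg a iha => exact (continuous_of_discreteTopology (f := Bool.not)).comp iha
  | conj a b iha ihb =>
    exact (continuous_of_discreteTopology (f := fun p : Bool × Bool => p.1 && p.2)).comp
      (iha.prodMk ihb)
  | disj a b iha ihb =>
    exact (continuous_of_discreteTopology (f := fun p : Bool × Bool => p.1 || p.2)).comp
      (iha.prodMk ihb)
  | impl a b iha ihb =>
    exact (continuous_of_discreteTopology (f := fun p : Bool × Bool => !p.1 || p.2)).comp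
      (iha.prodMk ihb)

theorem isClosed_setOf_sat (φ : PropForm V) : IsClosed {ν : V → Bool | Sat ν φ} :=
  isClosed_eq φ.continuous_eval continuous_const

theorem isClosed_setOf_satSet (T : Set (PropForm V)) :
    IsClosed {ν : V → Bool | SatSet ν T} := by
  simp only [SatSet, Set.ofPred_forall]
  exact isClosed_biInter fun φ _ => isClosed_setOf_sat φ

theorem exists_satSet_union_of_conj_mem (hne : Γ.Nonempty)
    (hconj : ∀ φ ∈ Γ, ∀ ψ ∈ Γ, φ.conj ψ ∈ Γ)
    (hsat : ∀ φ ∈ Γ, ∃ μ, SatSet μ T ∧ Sat μ φ) : ∃ μ, SatSet μ (T ∪ Γ) := by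
  let models (φ : Γ) : Set (V → Bool) := {μ | SatSet μ T ∧ Sat μ φ}
  have hclosed (φ : Γ) : IsClosed (models φ) :=
    (isClosed_setOf_satSet T).inter (isClosed_setOf_sat φ.1)
  have hdir : Directed (· ⊇ ·) models := fun φ ψ =>
    ⟨⟨φ.1.conj ψ.1, hconj _ φ.2 _ ψ.2⟩, fun _ h => ⟨h.1, (sat_conj.1 h.2).1⟩,
      fun _ h => ⟨h.1, (sat_conj.1 h.2).2⟩⟩
  have : Nonempty Γ := hne.to_subtype
  obtain ⟨μ, hμ⟩ := IsCompact.nonempty_iInter_of_directed_nonempty_isCompact_isClosed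
    models hdir (fun φ => hsat φ φ.2) (fun φ => (hclosed φ).isCompact) hclosed
  rw [Set.mem_iInter] at hμ
  obtain ⟨φ, hφ⟩ := hne
  exact ⟨μ, satSet_union.2 ⟨(hμ ⟨φ, hφ⟩).1, fun ψ hψ => (hμ ⟨ψ, hψ⟩).2⟩⟩

/-- The complete theory of the valuation `ν` in the language `𝓛(S)`. -/
def theoryOn (S : Set V) (ν : V → Bool) : Set (PropForm V) :=
  {φ | φ ∈ FormsOver S ∧ Sat ν φ}

theorem eqOn_of_satSet_theoryOn (h : SatSet μ (theoryOn S ν)) : Set.EqOn μ ν S := by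
  intro x hx
  have hxS : ({x} : Set V) ⊆ S := Set.singleton_subset_iff.2 hx
  refine Bool.eq_iff_iff.2 ⟨fun hμ => ?_, fun hν => h (.var x) ⟨hxS, hν⟩⟩
  by_contra hν
  exact sat_neg.1 (h (.neg (.var x)) ⟨hxS, sat_neg.2 hν⟩) hμ

theorem satSet_cn_iff : SatSet ν (Cn S T) ↔ ∃ μ, SatSet μ T ∧ Set.EqOn μ ν S := by
  constructor
  · intro hν
    have hsat : ∀ φ ∈ theoryOn S ν, ∃ μ, SatSet μ T ∧ Sat μ φ := by
      rintro φ ⟨hφS, hφ⟩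
      by_contra! hcon
      exact sat_neg.1 (hν φ.neg ⟨hφS, fun μ hμ => sat_neg.2 (hcon μ hμ)⟩) hφ
    obtain ⟨μ, hμ⟩ := exists_satSet_union_of_conj_mem (Γ := theoryOn S ν)
      ⟨.tru, Set.empty_subset S, sat_tru⟩
      (fun _ hφ _ hψ => ⟨Set.union_subset hφ.1 hψ.1, sat_conj.2 ⟨hφ.2, hψ.2⟩⟩) hsat
    exact ⟨μ, (satSet_union.1 hμ).1, eqOn_of_satSet_theoryOn (satSet_union.1 hμ).2⟩
  · rintro ⟨μ, hμ, hμν⟩ φ ⟨hφS, hφ⟩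
    exact (sat_congr (hμν.mono hφS)).1 (hφ μ hμ)

end Compactness

section Forgetting

variable {D P Q : Set V} {T T' T₁ : Set (PropForm V)} {φ : PropForm V}
  {μ μ' ν ν' : V → Bool}

/-- `T'` is a result of forgetting the variables in `D` from `T`, in the sense of Lin and Reiter:
the models of `T'` are the valuations obtained from models of `T` by changing values on `D`.
The notion is semantic, so `T'` is determined up to logical equivalence, and nothing is required
of the variables that occur in it. -/
def IsForgetting (D : Set V) (T T' : Set (PropForm V)) : Prop :=
  ∀ ν, SatSet ν T' ↔ ∃ μ, SatSet μ T ∧ Set.EqOn μ ν Dᶜ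

theorem isForgetting_cn (S : Set V) (T : Set (PropForm V)) :
    IsForgetting (varsOf T \ S) T (Cn (S ∩ varsOf T) T) := by
  classical
  refine fun ν => satSet_cn_iff.trans ⟨?_, ?_⟩
  · rintro ⟨μ, hμ, hμν⟩
    refine ⟨(varsOf T).piecewise μ ν, (satSet_congr (Set.piecewise_eqOn _ _ _)).2 hμ, ?_⟩
    intro x hx
    by_cases hxT : x ∈ varsOf T
    · have hxS : x ∈ S := by_contra fun hxS => hx ⟨hxT, hxS⟩
      rw [Set.piecewise_eq_of_mem _ _ _ hxT, hμν ⟨hxS, hxT⟩]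
    · rw [Set.piecewise_eq_of_notMem _ _ _ hxT]
  · rintro ⟨μ, hμ, hμν⟩
    exact ⟨μ, hμ, fun _ hx => hμν fun hxD => hxD.2 hx.1⟩

theorem IsForgetting.union_left (h : IsForgetting D T T') (hT₁ : Disjoint (varsOf T₁) D) :
    IsForgetting D (T₁ ∪ T) (T₁ ∪ T') := by
  have hsat {μ ν : V → Bool} (hμν : Set.EqOn μ ν Dᶜ) : SatSet μ T₁ ↔ SatSet ν T₁ :=
    satSet_congr (hμν.mono hT₁.subset_compl_right)
  intro ν
  simp only [satSet_union, h ν]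
  constructor
  · rintro ⟨hν, μ, hμ, hμν⟩
    exact ⟨μ, ⟨(hsat hμν).2 hν, hμ⟩, hμν⟩
  · rintro ⟨μ, ⟨hμ₁, hμ⟩, hμν⟩
    exact ⟨(hsat hμν).1 hμ₁, μ, hμ, hμν⟩

-- A variable in both `P` and `Q` is still minimized, hence `Q \ P` rather than `Q`.
theorem circLt_congr (hμ : Set.EqOn μ μ' (Q \ P)ᶜ) (hν : Set.EqOn ν ν' (Q \ P)ᶜ) :
    circLt P Q μ ν ↔ circLt P Q μ' ν' := by
  have hfixed {x : V} (hx : x ∉ P ∪ Q) : x ∈ (Q \ P)ᶜ := fun h => hx (Or.inr h.1)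
  have hmin {ρ ρ' : V → Bool} (h : Set.EqOn ρ ρ' (Q \ P)ᶜ) :
      {x | x ∈ P ∧ ρ x = true} = {x | x ∈ P ∧ ρ' x = true} :=
    Set.ext fun x => and_congr_right fun hx => by rw [h fun hxQ => hxQ.2 hx]
  unfold circLt circLe
  rw [hmin hμ, hmin hν,
    forall₂_congr fun x hx => by rw [hμ (hfixed hx), hν (hfixed hx)]]

theorem IsForgetting.circModel_iff (h : IsForgetting D T T') (hD : D ⊆ Q \ P) :
    CircModel T' P Q ν ↔ ∃ μ, CircModel T P Q μ ∧ Set.EqOn μ ν Dᶜ := by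
  have hlt {μ μ' ν ν' : V → Bool} (hμ : Set.EqOn μ μ' Dᶜ) (hν : Set.EqOn ν ν' Dᶜ) :
      circLt P Q μ ν ↔ circLt P Q μ' ν' :=
    circLt_congr (hμ.mono (Set.compl_subset_compl.2 hD))
      (hν.mono (Set.compl_subset_compl.2 hD))
  constructor
  · rintro ⟨hν, hmin⟩
    obtain ⟨μ, hμ, hμν⟩ := (h ν).1 hν
    refine ⟨μ, ⟨hμ, ?_⟩, hμν⟩
    rintro ⟨ρ, hρ, hρμ⟩
    exact hmin ⟨ρ, (h ρ).2 ⟨ρ, hρ, Set.eqOn_refl ρ _⟩, (hlt (Set.eqOn_refl ρ _) hμν).1 hρμ⟩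
  · rintro ⟨μ, ⟨hμ, hmin⟩, hμν⟩
    refine ⟨(h ν).2 ⟨μ, hμ, hμν⟩, ?_⟩
    rintro ⟨ν', hν', hν'ν⟩
    obtain ⟨μ', hμ', hμν'⟩ := (h ν').1 hν'
    exact hmin ⟨μ', hμ', (hlt hμν' hμν).2 hν'ν⟩

theorem IsForgetting.circEntails_iff (h : IsForgetting D T T') (hD : D ⊆ Q \ P)
    (hφ : Disjoint φ.vars D) : CircEntails T' P Q φ ↔ CircEntails T P Q φ := by
  constructor
  · intro hT' μ hμ
    exact hT' μ ((h.circModel_iff hD).2 ⟨μ, hμ, Set.eqOn_refl μ _⟩)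
  · intro hT ν hν
    obtain ⟨μ, hμ, hμν⟩ := (h.circModel_iff hD).1 hν
    exact (sat_congr (hμν.mono hφ.subset_compl_right)).1 (hT μ hμ)

end Forgetting

theorem circ_interpolation_between_theories_general
    (T₁ T₂ γ : Set (PropForm V)) (P Q : Set V)
    (hQ : varsOf T₂ \ varsOf T₁ ⊆ Q \ P)
    (hγ : EquivTheories γ (Cn (varsOf T₁ ∩ varsOf T₂) T₂)) :
    ∀ φ ∈ FormsOver (varsOf T₁),
      (CircEntails (T₁ ∪ γ) P Q φ ↔ CircEntails (T₁ ∪ T₂) P Q φ) := by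
  intro φ hφ
  have hforget : IsForgetting (varsOf T₂ \ varsOf T₁) T₂ γ := fun ν =>
    (hγ ν).trans (isForgetting_cn (varsOf T₁) T₂ ν)
  exact (hforget.union_left Set.disjoint_sdiff_right).circEntails_iff hQ
    (Set.disjoint_sdiff_right.mono_left hφ)

/-- Interpolation Between Theories. -/
theorem circ_interpolation_between_theories {V : Type*}
    (T₁ T₂ γ : Set (PropForm V)) (P Q : Set V)
    (hPQ : P ∪ Q ⊆ varsOf T₁ ∪ varsOf T₂) (hP : P ⊆ varsOf T₁)
    (hT₂ : varsOf T₂ ⊆ P ∪ Q)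
    (hγ : EquivTheories γ (Cn (varsOf T₁ ∩ varsOf T₂) T₂)) :
    ∀ φ ∈ FormsOver (varsOf T₁),
      (CircEntails (T₁ ∪ γ) P Q φ ↔ CircEntails (T₁ ∪ T₂) P Q φ) :=
  circ_interpolation_between_theories_general T₁ T₂ γ P Q
    (Set.subset_sdiff.2 ⟨(Set.sdiff_subset_sdiff_right hP).trans (Set.sdiff_subset_iff.2 hT₂),
      Set.disjoint_sdiff_left.mono_right hP⟩) hγ

end NMR
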